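/- For all x, y ∈ S, either d[l](x,y) ≥ r(x), or d[l](x,y) = dᵢ(x,y) for some i ∈ I with x, y ∈ σᵢ(D). -/

import Mathlib

noncomputable section

open Set
open scoped ENNReal

/-- The Euclidean plane `ℝ²` with the Euclidean metric. -/
abbrev E2 : Type := EuclideanSpace ℝ (Fin 2)

/-- Vertices of the fixed closed regular (equilateral) triangle of side length 1. -/
def p0 : E2 := !₂[0, 0]
def p1 : E2 := !₂[1, 0]
def p2 : E2 := !₂[1 / 2, Real.sqrt 3 / 2]

/-- `Dtri` is the fixed closed regular triangle in `ℝ²` with edge length 1. -/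
def Dtri : Set E2 := convexHull ℝ {p0, p1, p2}

/-- `V0` is the set of the three vertices of `Dtri`. -/
def V0 : Set E2 := {p0, p1, p2}

/-- The three closed edges of `Dtri`. -/
def e01 : Set E2 := segment ℝ p0 p1
def e12 : Set E2 := segment ℝ p1 p2
def e02 : Set E2 := segment ℝ p0 p2

/-- `E0` is the set of the three closed edges of `Dtri`. -/
def E0 : Set (Set E2) := {e01, e12, e02}

/-- The open edge `e° = e ∖ V₀`. -/
def eo (e : Set E2) : Set E2 := e \ V0

/-- `Do = D°` is the interior of `Dtri` in `ℝ²`. -/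
def Do : Set E2 := interior Dtri

/-- `l : E₀ → ℝ` is positive and satisfies the strict triangle inequalities:
`l e₁ + l e₂ > l e₃` whenever `{e₁, e₂, e₃} = E₀`. -/
def TriIneq (l : Set E2 → ℝ) : Prop :=
  (∀ e ∈ E0, 0 < l e) ∧
  ∀ e₁ e₂ e₃ : Set E2, ({e₁, e₂, e₃} : Set (Set E2)) = E0 → l e₁ + l e₂ > l e₃

/-- A linear map `f : ℝ² → ℝ²` realizes the edge lengths `l`, i.e. for each `e ∈ E₀`
the segment `f(e)` has Euclidean length `l e`. -/
def Realizes (f : E2 →ₗ[ℝ] E2) (l : Set E2 → ℝ) : Prop :=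
  dist (f p0) (f p1) = l e01 ∧ dist (f p1) (f p2) = l e12 ∧ dist (f p0) (f p2) = l e02

/-- The metric `d[l]` on `Dtri`, defined by `d[l](x,y) = |f x - f y|₂` for a linear map `f`
realizing the edge lengths `l` (this is independent of the choice of `f`). -/
def dD (l : Set E2 → ℝ) (x y : E2) : ℝ :=
  letI := Classical.propDecidable (∃ f : E2 →ₗ[ℝ] E2, Realizes f l)
  if h : ∃ f : E2 →ₗ[ℝ] E2, Realizes f l then dist (h.choose x) (h.choose y) else 0

/-- A triangulation `T = (σᵢ)_{i ∈ I}`, `I = Fin n`, of a topological space `S`: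
a finite family of continuous maps `σᵢ : Dtri → S` such that
(a) `σᵢ` is injective on each open edge, (b) `σᵢ` is injective on `D°`,
(c) `S` is the disjoint union of `⋃ᵢ σᵢ(V₀)`, the sets `σᵢ(D°)`, and the distinct sets
among the `σᵢ(e°)`, and (d) glued edges are identified by a linear homeomorphism. -/
structure Triangulation (S : Type) [TopologicalSpace S] (n : ℕ) where
  σ : Fin n → E2 → S
  continuousOn : ∀ i, ContinuousOn (σ i) Dtri
  inj_edge : ∀ i, ∀ e ∈ E0, InjOn (σ i) (eo e)
  inj_int : ∀ i, InjOn (σ i) Do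
  cover : (⋃ i, σ i '' V0) ∪ (⋃ i, σ i '' Do) ∪ (⋃ i, ⋃ e ∈ E0, σ i '' eo e) = univ
  disj_int : ∀ i j, i ≠ j → Disjoint (σ i '' Do) (σ j '' Do)
  disj_vert_int : ∀ j, Disjoint (⋃ i, σ i '' V0) (σ j '' Do)
  disj_vert_edge : ∀ j, ∀ e ∈ E0, Disjoint (⋃ i, σ i '' V0) (σ j '' eo e)
  disj_int_edge : ∀ i j, ∀ e ∈ E0, Disjoint (σ i '' Do) (σ j '' eo e)
  edge_eq_or_disjoint : ∀ i j, ∀ e ∈ E0, ∀ e' ∈ E0,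
    σ i '' eo e = σ j '' eo e' ∨ Disjoint (σ i '' eo e) (σ j '' eo e')
  glue : ∀ i j, ∀ e ∈ E0, ∀ e' ∈ E0, σ i '' eo e = σ j '' eo e' →
    ∃ A : E2 →ᵃ[ℝ] E2, A '' e = e' ∧ ∀ x ∈ e, σ j (A x) = σ i x

variable {S : Type} [TopologicalSpace S] {n : ℕ}

/-- `l ∈ ℝ^{E(T)}_Δ`: `l` assigns positive lengths to the edges of `T` satisfying the
strict triangle inequalities in each triangle. -/
def TriIneqT (T : Triangulation S n) (l : Set S → ℝ) : Prop :=
  (∀ (i : Fin n), ∀ e ∈ E0, 0 < l (T.σ i '' e)) ∧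
  ∀ (i : Fin n), ∀ e₁ e₂ e₃ : Set E2, ({e₁, e₂, e₃} : Set (Set E2)) = E0 →
    l (T.σ i '' e₁) + l (T.σ i '' e₂) > l (T.σ i '' e₃)

/-- The restricted edge lengths `l^{(i)}` on the triangle `σᵢ(D)`: `l^{(i)}_e = l_{σᵢ(e)}`. -/
def lRes (T : Triangulation S n) (l : Set S → ℝ) (i : Fin n) : Set E2 → ℝ :=
  fun e => l (T.σ i '' e)

/-- `dᵢ(x,y) = min { d[l^{(i)}](x',y') : x' ∈ σᵢ⁻¹(x), y' ∈ σᵢ⁻¹(y) }` for `x, y ∈ σᵢ(D)`. -/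
def dTri (T : Triangulation S n) (l : Set S → ℝ) (i : Fin n) (x y : S) : ℝ :=
  sInf { r | ∃ x' ∈ Dtri, ∃ y' ∈ Dtri,
    T.σ i x' = x ∧ T.σ i y' = y ∧ r = dD (lRes T l i) x' y' }

/-- The set of sums `Σ_j d_{i_j}(x_{j-1}, x_j)` over chains from `x` to `y`. -/
def chainSums (T : Triangulation S n) (l : Set S → ℝ) (x y : S) : Set ℝ :=
  { r | ∃ (k : ℕ) (c : ℕ → S) (idx : ℕ → Fin n),
      c 0 = x ∧ c k = y ∧
      (∀ j < k, c j ∈ T.σ (idx j) '' Dtri ∧ c (j + 1) ∈ T.σ (idx j) '' Dtri) ∧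
      r = ∑ j ∈ Finset.range k, dTri T l (idx j) (c j) (c (j + 1)) }

/-- The glued metric `d[l]` on `S`. -/
def dGlue (T : Triangulation S n) (l : Set S → ℝ) (x y : S) : ℝ :=
  sInf (chainSums T l x y)

/-- `K(x)`: the union of the edges of `Dtri` not containing `x`. -/
def Kset (x : E2) : Set E2 := ⋃₀ {e ∈ E0 | x ∉ e}

/-- The distance from `x` to `K(x)` in `(Dtri, d[l'])`. -/
def rObs (l' : Set E2 → ℝ) (x : E2) : ℝ := sInf { r | ∃ y ∈ Kset x, r = dD l' x y }

/-- `r(x) = min { rᵢ(x') : i ∈ I, x' ∈ σᵢ⁻¹(x) }` for `x ∈ S`. -/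
def rS (T : Triangulation S n) (l : Set S → ℝ) (x : S) : ℝ :=
  sInf { r | ∃ i : Fin n, ∃ x' ∈ Dtri, T.σ i x' = x ∧ r = rObs (lRes T l i) x' }

/-!
Moving along a chain starting at `x`, a point `z` at distance less than `r(x)` from `x` in one
triangle lies in an open face of it whose closure contains `x`, so the segment from `x` to `z` can
be redrawn, with the same length, in any other triangle containing `z`. Hence the first two links
of a chain of length less than `r(x)` can be merged by the triangle inequality inside the second
triangle. By induction the whole chain is no shorter than some `dᵢ(x, y)`, and as there are only
finitely many triangles, the infimum over chains is the least of the `dᵢ(x, y)`.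
-/

section AffineBasis

variable {ι E : Type*} [AddCommGroup E]

lemma exists_linearMap_vsub_eq_sub {k F P : Type*} [Ring k] [Module k E] [AddTorsor E P]
    [AddCommGroup F] [Module k F] (b : AffineBasis ι k P) (q : ι → F) :
    ∃ f : E →ₗ[k] F, ∀ i j, f (b i -ᵥ b j) = q i - q j := by
  obtain ⟨o⟩ := b.nonempty
  let f : E →ₗ[k] F := (b.basisOf o).constr ℕ fun j => q j - q o
  have hf (i : ι) : f (b i -ᵥ b o) = q i - q o := by
    by_cases hi : i = o
    · simp [hi]
    · rw [← b.basisOf_apply o ⟨i, hi⟩, Module.Basis.constr_basis]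
  refine ⟨f, fun i j => ?_⟩
  rw [← vsub_sub_vsub_cancel_right (b i) (b j) (b o), map_sub, hf, hf, sub_sub_sub_cancel_right]

lemma mem_convexHull_image_affineBasis {R : Type*} [Field R] [LinearOrder R] [IsStrictOrderedRing R]
    [Module R E] (b : AffineBasis ι R E) {s : Set ι} {x : E} :
    x ∈ convexHull R (b '' s) ↔ x ∈ convexHull R (range b) ∧ ∀ i ∉ s, b.coord i x = 0 := by
  classical
  constructor
  · intro hx
    refine ⟨convexHull_mono (image_subset_range b s) hx, fun i hi => ?_⟩
    have hsub : b '' s ⊆ b.coord i ⁻¹' {0} := by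
      rintro _ ⟨j, hj, rfl⟩
      exact b.coord_apply_ne (ne_of_mem_of_not_mem hj hi).symm
    exact convexHull_min hsub ((convex_singleton 0).affine_preimage (b.coord i)) hx
  · rintro ⟨hx, hs⟩
    rw [convexHull_range_eq_exists_affineCombination] at hx
    obtain ⟨t, w, hw₀, hw₁, rfl⟩ := hx
    have hzero : ∀ i ∈ t, i ∉ t.filter (· ∈ s) → w i = 0 := fun i hit hi => by
      rw [← b.coord_apply_combination_of_mem hit hw₁]
      exact hs i fun his => hi (Finset.mem_filter.mpr ⟨hit, his⟩)
    rw [t.affineCombination_eq_linear_combination _ _ hw₁, ← Finset.sum_subset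
      (t.filter_subset _) fun i hit hi => by rw [hzero i hit hi, zero_smul]]
    refine (convex_convexHull R _).sum_mem (fun i hi => hw₀ i (Finset.mem_filter.mp hi).1) ?_
      fun i hi => subset_convexHull R _ (mem_image_of_mem b (Finset.mem_filter.mp hi).2)
    rw [Finset.sum_subset (t.filter_subset _) hzero, hw₁]

end AffineBasis

section NormedSpace

variable {E F G : Type*} [SeminormedAddCommGroup F] [NormedSpace ℝ F]

/-- The third vertex is found on the sphere of radius `c` around `p`, on which the distance to `q`
takes all values between `|a - c|` and `a + c`. -/
lemma exists_dist_eq_of_le_add [NormedAddCommGroup E] [NormedSpace ℝ E]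
    (hE : 1 < Module.rank ℝ E) {a b c : ℝ} (ha : a ≤ b + c) (hb : b ≤ a + c) (hc : c ≤ a + b) :
    ∃ p q r : E, dist p q = a ∧ dist q r = b ∧ dist p r = c := by
  have ha₀ : 0 ≤ a := by linarith
  have hc₀ : 0 ≤ c := by linarith
  have : Nontrivial E := rank_pos_iff_nontrivial.mp (zero_lt_one.trans hE)
  obtain ⟨u, hu⟩ := exists_norm_eq E zero_le_one
  have hmem (s : ℝ) (hs : |s| = c) : s • u ∈ Metric.sphere (0 : E) c := by
    simp [norm_smul, hu, hs]
  have hdist (s : ℝ) : dist (a • u) (s • u) = |a - s| := by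
    rw [dist_eq_norm, ← sub_smul, norm_smul, hu, mul_one, Real.norm_eq_abs]
  have hb_mem : b ∈ Icc (dist (a • u) (c • u)) (dist (a • u) (-c • u)) := by
    rw [hdist, hdist, sub_neg_eq_add, abs_of_nonneg (add_nonneg ha₀ hc₀)]
    exact ⟨abs_le.mpr ⟨by linarith, by linarith⟩, hb⟩
  obtain ⟨r, hr, hqr⟩ := (isPreconnected_sphere hE 0 c).intermediate_value
    (hmem c (abs_of_nonneg hc₀)) (hmem (-c) (by rw [abs_neg, abs_of_nonneg hc₀]))
    (f := dist (a • u)) (by fun_prop) hb_mem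
  refine ⟨0, a • u, r, ?_, hqr, ?_⟩
  · rw [dist_zero_left, norm_smul, hu, mul_one, Real.norm_of_nonneg ha₀]
  · rwa [dist_comm]

lemma diam_image_segment [AddCommGroup E] [Module ℝ E] (f : E →ᵃ[ℝ] F) (p q : E) :
    Metric.diam (f '' segment ℝ p q) = dist (f p) (f q) := by
  rw [image_segment, ← convexHull_pair, convexHull_diam, Metric.diam_pair]

lemma dist_map_eq_of_mem_segment [AddCommGroup E] [Module ℝ E] [SeminormedAddCommGroup G]
    [NormedSpace ℝ G] {f : E →ᵃ[ℝ] F} {g : E →ᵃ[ℝ] G} {p q : E}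
    (h : dist (f p) (f q) = dist (g p) (g q)) {x y : E}
    (hx : x ∈ segment ℝ p q) (hy : y ∈ segment ℝ p q) :
    dist (f x) (f y) = dist (g x) (g y) := by
  rw [segment_eq_image_lineMap] at hx hy
  obtain ⟨s, -, rfl⟩ := hx
  obtain ⟨t, -, rfl⟩ := hy
  simp only [AffineMap.apply_lineMap, dist_lineMap_lineMap, h]

end NormedSpace

section FiniteClosedCover

variable {X ι : Type*} [TopologicalSpace X] [Finite ι] {F : ι → Set X} {R : Set X}

lemma isClosed_of_forall_exists_mem_subset (hF : ∀ i, IsClosed (F i))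
    (hR : ∀ x ∈ R, ∃ i, x ∈ F i ∧ F i ⊆ R) : IsClosed R := by
  have : R = ⋃ i ∈ {i | F i ⊆ R}, F i := by
    refine Subset.antisymm (fun x hx => ?_) (iUnion₂_subset fun i hi => hi)
    obtain ⟨i, hxi, hi⟩ := hR x hx
    exact mem_biUnion hi hxi
  rw [this]
  exact (toFinite _).isClosed_biUnion fun i _ => hF i

lemma isClopen_of_finite_closed_cover (hF : ∀ i, IsClosed (F i)) (hcover : ∀ x, ∃ i, x ∈ F i)
    (hR : ∀ i, ∀ x ∈ F i, ∀ y ∈ F i, x ∈ R → y ∈ R) : IsClopen R := by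
  refine ⟨isClosed_of_forall_exists_mem_subset hF fun x hx => ?_, isClosed_compl_iff.mp
    (isClosed_of_forall_exists_mem_subset hF fun x hx => ?_)⟩ <;> obtain ⟨i, hi⟩ := hcover x
  · exact ⟨i, hi, fun y hy => hR i x hi y hy hx⟩
  · exact ⟨i, hi, fun y hy hyR => hx (hR i y hy x hi hyR)⟩

end FiniteClosedCover

section Triangle

lemma affineIndependent_vertices : AffineIndependent ℝ ![p0, p1, p2] := by
  rw [affineIndependent_iff_not_collinear_set, collinear_iff_of_mem (mem_insert p0 _)]
  rintro ⟨v, hv⟩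
  obtain ⟨r, hr⟩ := hv p1 (by simp)
  obtain ⟨s, hs⟩ := hv p2 (by simp)
  have hr₀ := congrArg (fun x : E2 => x 0) hr
  have hr₁ := congrArg (fun x : E2 => x 1) hr
  have hs₁ := congrArg (fun x : E2 => x 1) hs
  simp only [p0, p1, p2, vadd_eq_add, PiLp.add_apply, PiLp.smul_apply, smul_eq_mul,
    PiLp.toLp_apply, Matrix.cons_val_zero, Matrix.cons_val_one, add_zero] at hr₀ hr₁ hs₁
  have hv₁ : v 1 = 0 := (mul_eq_zero.mp hr₁.symm).resolve_left (by rintro rfl; simp at hr₀)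
  simp [hv₁] at hs₁

/-- The vertices of `Dtri` as an affine basis of the plane. Its coordinate functions are the
barycentric coordinates, in terms of which the faces of `Dtri` are described. -/
def vertexBasis : AffineBasis (Fin 3) ℝ E2 where
  toFun := ![p0, p1, p2]
  ind' := affineIndependent_vertices
  tot' := affineIndependent_vertices.affineSpan_eq_top_iff_card_eq_finrank_add_one.mpr (by simp)

lemma range_vertexBasis : range vertexBasis = V0 := by
  change range ![p0, p1, p2] = V0
  rw [Matrix.range_cons, Matrix.range_cons_cons_empty, singleton_union, V0]

lemma Dtri_eq_convexHull_range : Dtri = convexHull ℝ (range vertexBasis) := by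
  rw [range_vertexBasis, V0, Dtri]

lemma mem_Dtri_iff {x : E2} : x ∈ Dtri ↔ ∀ i, 0 ≤ vertexBasis.coord i x := by
  rw [Dtri_eq_convexHull_range, vertexBasis.convexHull_eq_nonneg_coord, mem_ofPred_eq]

lemma mem_Do_iff {x : E2} : x ∈ Do ↔ ∀ i, 0 < vertexBasis.coord i x := by
  rw [Do, Dtri_eq_convexHull_range, vertexBasis.interior_convexHull, mem_ofPred_eq]

lemma V0_subset_Dtri : V0 ⊆ Dtri := subset_convexHull ℝ _

lemma isCompact_Dtri : IsCompact Dtri := by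
  rw [Dtri_eq_convexHull_range]
  exact (finite_range _).isCompact_convexHull ℝ

/-- The edge of `Dtri` opposite to its `k`-th vertex, given by its barycentric equation. -/
def oppositeEdge (k : Fin 3) : Set E2 := {x ∈ Dtri | vertexBasis.coord k x = 0}

lemma segment_vertexBasis_eq_oppositeEdge {i j k : Fin 3} (h : ({k}ᶜ : Set (Fin 3)) = {i, j}) :
    segment ℝ (vertexBasis i) (vertexBasis j) = oppositeEdge k := by
  rw [← convexHull_pair, ← image_pair, ← h]
  ext x
  simp [oppositeEdge, mem_convexHull_image_affineBasis, Dtri_eq_convexHull_range]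

lemma E0_eq_range_oppositeEdge : E0 = range oppositeEdge := by
  have h₀ : e12 = oppositeEdge 0 :=
    segment_vertexBasis_eq_oppositeEdge (i := 1) (j := 2) (by ext i; fin_cases i <;> simp)
  have h₁ : e02 = oppositeEdge 1 :=
    segment_vertexBasis_eq_oppositeEdge (i := 0) (j := 2) (by ext i; fin_cases i <;> simp)
  have h₂ : e01 = oppositeEdge 2 :=
    segment_vertexBasis_eq_oppositeEdge (i := 0) (j := 1) (by ext i; fin_cases i <;> simp)
  rw [E0, h₀, h₁, h₂]
  ext e
  constructor
  · rintro (rfl | rfl | rfl) <;> exact mem_range_self _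
  · rintro ⟨k, rfl⟩
    fin_cases k <;> simp

lemma oppositeEdge_mem_E0 (k : Fin 3) : oppositeEdge k ∈ E0 :=
  E0_eq_range_oppositeEdge ▸ mem_range_self k

lemma subset_Dtri_of_mem_E0 {e : Set E2} (he : e ∈ E0) : e ⊆ Dtri := by
  rw [E0_eq_range_oppositeEdge] at he
  obtain ⟨k, rfl⟩ := he
  exact sep_subset _ _

lemma mem_V0_or_mem_Do_or_mem_eo {x : E2} (hx : x ∈ Dtri) :
    x ∈ V0 ∨ x ∈ Do ∨ ∃ e ∈ E0, x ∈ eo e := by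
  by_cases hV : x ∈ V0
  · exact Or.inl hV
  by_cases hpos : ∀ i, 0 < vertexBasis.coord i x
  · exact Or.inr (Or.inl (mem_Do_iff.mpr hpos))
  push Not at hpos
  obtain ⟨k, hk⟩ := hpos
  have hzero : vertexBasis.coord k x = 0 := hk.antisymm (mem_Dtri_iff.mp hx k)
  exact Or.inr (Or.inr ⟨_, oppositeEdge_mem_E0 k, ⟨hx, hzero⟩, hV⟩)

lemma mem_of_notMem_Kset {x z : E2} (hz : z ∉ Kset x) {e : Set E2} (he : e ∈ E0) (hze : z ∈ e) :
    x ∈ e := by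
  by_contra hxe
  exact hz ⟨e, ⟨he, hxe⟩, hze⟩

lemma eq_of_mem_V0_of_notMem_Kset {x z : E2} (hzV : z ∈ V0) (hz : z ∉ Kset x) : x = z := by
  have hzD := V0_subset_Dtri hzV
  rw [← range_vertexBasis] at hzV
  obtain ⟨k, rfl⟩ := hzV
  have hzero : ∀ i ≠ k, vertexBasis.coord i x = 0 := fun i hi =>
    (mem_of_notMem_Kset hz (oppositeEdge_mem_E0 i) ⟨hzD, vertexBasis.coord_apply_ne hi⟩).2
  have hone : vertexBasis.coord k x = 1 := by
    rw [← vertexBasis.sum_coord_apply_eq_one x, Finset.sum_eq_single k fun i _ => hzero i]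
    simp
  refine vertexBasis.ext_elem fun i => ?_
  by_cases hi : i = k
  · rw [hi, hone, vertexBasis.coord_apply_eq]
  · rw [hzero i hi, vertexBasis.coord_apply_ne hi]

end Triangle

section TriangleMetric

variable {l : Set E2 → ℝ}

lemma exists_realizes (hl : TriIneq l) : ∃ f : E2 →ₗ[ℝ] E2, Realizes f l := by
  have h₂ : l e01 + l e12 > l e02 := hl.2 e01 e12 e02 rfl
  have h₀ : l e12 + l e02 > l e01 := hl.2 e12 e02 e01 (by ext; simp [E0]; tauto)
  have h₁ : l e02 + l e01 > l e12 := hl.2 e02 e01 e12 (by ext; simp [E0]; tauto)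
  obtain ⟨q₀, q₁, q₂, h₀₁, h₁₂, h₀₂⟩ := exists_dist_eq_of_le_add (E := E2)
    (by rw [← Module.finrank_eq_rank]; simp)
    h₀.le (h₁.le.trans_eq (add_comm _ _)) h₂.le
  obtain ⟨f, hf⟩ := exists_linearMap_vsub_eq_sub vertexBasis ![q₀, q₁, q₂]
  have hdist (i j : Fin 3) : dist (f (vertexBasis i)) (f (vertexBasis j)) =
      dist (![q₀, q₁, q₂] i) (![q₀, q₁, q₂] j) := by
    rw [dist_eq_norm, dist_eq_norm, ← map_sub, ← vsub_eq_sub, hf]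
  exact ⟨f, (hdist 0 1).trans h₀₁, (hdist 1 2).trans h₁₂, (hdist 0 2).trans h₀₂⟩

lemma exists_realizes_dD_eq_dist (hl : TriIneq l) :
    ∃ f : E2 →ₗ[ℝ] E2, Realizes f l ∧ ∀ x y, dD l x y = dist (f x) (f y) :=
  have h := exists_realizes hl
  ⟨h.choose, h.choose_spec, fun _ _ => dif_pos h⟩

lemma dD_nonneg (l : Set E2 → ℝ) (x y : E2) : 0 ≤ dD l x y := by
  unfold dD
  split_ifs
  exacts [dist_nonneg, le_rfl]

lemma dD_self (l : Set E2 → ℝ) (x : E2) : dD l x x = 0 := by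
  unfold dD
  split_ifs
  exacts [dist_self _, rfl]

lemma dD_triangle (l : Set E2 → ℝ) (x y z : E2) : dD l x z ≤ dD l x y + dD l y z := by
  unfold dD
  split_ifs
  exacts [dist_triangle _ _ _, (add_zero 0).ge]

lemma Realizes.diam_image {f : E2 →ₗ[ℝ] E2} (hf : Realizes f l) {e : Set E2} (he : e ∈ E0) :
    Metric.diam (f '' e) = l e := by
  obtain ⟨h₀₁, h₁₂, h₀₂⟩ := hf
  rcases he with rfl | rfl | rfl
  · exact (diam_image_segment f.toAffineMap p0 p1).trans h₀₁
  · exact (diam_image_segment f.toAffineMap p1 p2).trans h₁₂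
  · exact (diam_image_segment f.toAffineMap p0 p2).trans h₀₂

lemma exists_eq_segment_of_mem_E0 {e : Set E2} (he : e ∈ E0) : ∃ p q, e = segment ℝ p q := by
  rcases he with rfl | rfl | rfl <;> exact ⟨_, _, rfl⟩

lemma dD_map_eq_of_image_eq {l' : Set E2 → ℝ} (hl : TriIneq l) (hl' : TriIneq l') {e e' : Set E2}
    (he : e ∈ E0) (he' : e' ∈ E0) (hlen : l' e' = l e) {A : E2 →ᵃ[ℝ] E2} (hA : A '' e = e')
    {x y : E2} (hx : x ∈ e) (hy : y ∈ e) : dD l' (A x) (A y) = dD l x y := by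
  obtain ⟨f, hf, hfdist⟩ := exists_realizes_dD_eq_dist hl
  obtain ⟨g, hg, hgdist⟩ := exists_realizes_dD_eq_dist hl'
  obtain ⟨p, q, rfl⟩ := exists_eq_segment_of_mem_E0 he
  have hends : dist (g (A p)) (g (A q)) = dist (f p) (f q) :=
    calc
      dist (g (A p)) (g (A q)) = Metric.diam (g '' (A '' segment ℝ p q)) := by
        rw [image_image]
        exact (diam_image_segment (g.toAffineMap.comp A) p q).symm
      _ = Metric.diam (f '' segment ℝ p q) := by rw [hA, hg.diam_image he', hf.diam_image he, hlen]
      _ = dist (f p) (f q) := diam_image_segment f.toAffineMap p q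
  rw [hgdist, hfdist]
  exact dist_map_eq_of_mem_segment (f := g.toAffineMap.comp A) (g := f.toAffineMap) hends hx hy

lemma rObs_nonneg (l : Set E2 → ℝ) (x : E2) : 0 ≤ rObs l x :=
  Real.sInf_nonneg <| by
    rintro _ ⟨y, -, rfl⟩
    exact dD_nonneg l x y

lemma rObs_le_dD {x z : E2} (hz : z ∈ Kset x) : rObs l x ≤ dD l x z := by
  refine csInf_le ⟨0, ?_⟩ ⟨z, hz, rfl⟩
  rintro _ ⟨y, -, rfl⟩
  exact dD_nonneg l x y

end TriangleMetric

section Triangulation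

variable {T : Triangulation S n} {l : Set S → ℝ} {i j : Fin n}

namespace Triangulation

lemma exists_mem_image_Dtri (T : Triangulation S n) (x : S) : ∃ i, x ∈ T.σ i '' Dtri := by
  have hx : x ∈ (⋃ i, T.σ i '' V0) ∪ (⋃ i, T.σ i '' Do) ∪ ⋃ i, ⋃ e ∈ E0, T.σ i '' eo e :=
    T.cover ▸ mem_univ x
  simp only [mem_union, mem_iUnion] at hx
  rcases hx with (⟨i, hi⟩ | ⟨i, hi⟩) | ⟨i, e, he, hi⟩
  · exact ⟨i, image_mono V0_subset_Dtri hi⟩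
  · exact ⟨i, image_mono interior_subset hi⟩
  · exact ⟨i, image_mono (sdiff_subset.trans (subset_Dtri_of_mem_E0 he)) hi⟩

lemma isClosed_image_Dtri [T2Space S] (T : Triangulation S n) (i : Fin n) :
    IsClosed (T.σ i '' Dtri) :=
  (isCompact_Dtri.image_of_continuousOn (T.continuousOn i)).isClosed

lemma eq_and_eq_of_mem_Do {z w : E2} (hz : z ∈ Do) (hw : w ∈ Dtri) (h : T.σ i z = T.σ j w) :
    i = j ∧ z = w := by
  have hzi : T.σ j w ∈ T.σ i '' Do := ⟨z, hz, h⟩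
  rcases mem_V0_or_mem_Do_or_mem_eo hw with hwV | hwDo | ⟨e, he, hwe⟩
  · exact absurd hzi (disjoint_left.mp (T.disj_vert_int i) (mem_iUnion_of_mem j ⟨w, hwV, rfl⟩))
  · obtain rfl : i = j := by
      by_contra hij
      exact disjoint_left.mp (T.disj_int i j hij) hzi ⟨w, hwDo, rfl⟩
    exact ⟨rfl, T.inj_int i hz hwDo h⟩
  · exact absurd ⟨w, hwe, rfl⟩ (disjoint_left.mp (T.disj_int_edge i j e he) hzi)

lemma exists_affineMap_of_mem_eo {e : Set E2} (he : e ∈ E0) {z w : E2} (hz : z ∈ eo e)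
    (hw : w ∈ Dtri) (h : T.σ i z = T.σ j w) :
    ∃ e' ∈ E0, ∃ A : E2 →ᵃ[ℝ] E2, A '' e = e' ∧ A z = w ∧ ∀ x ∈ e, T.σ j (A x) = T.σ i x := by
  have hnotV : ∀ v ∈ V0, T.σ j v ≠ T.σ i z := fun v hv hvz =>
    disjoint_left.mp (T.disj_vert_edge i e he) (mem_iUnion_of_mem j ⟨v, hv, hvz⟩) ⟨z, hz, rfl⟩
  obtain ⟨e', he', hwe'⟩ : ∃ e' ∈ E0, w ∈ eo e' := by
    rcases mem_V0_or_mem_Do_or_mem_eo hw with hwV | hwDo | hwe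
    · exact absurd h.symm (hnotV w hwV)
    · exact absurd ⟨z, hz, h⟩ (disjoint_left.mp (T.disj_int_edge j i e he) ⟨w, hwDo, rfl⟩)
    · exact hwe
  have himage : T.σ i '' eo e = T.σ j '' eo e' :=
    (T.edge_eq_or_disjoint i j e he e' he').resolve_right fun hdisj =>
      disjoint_left.mp hdisj ⟨z, hz, rfl⟩ ⟨w, hwe', h.symm⟩
  obtain ⟨A, hA, hAσ⟩ := T.glue i j e he e' he' himage
  have hAz : A z ∈ eo e' :=
    ⟨hA ▸ mem_image_of_mem A hz.1, fun hV => hnotV _ hV (hAσ z hz.1)⟩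
  exact ⟨e', he', A, hA, T.inj_edge j e' he' hAz hwe' ((hAσ z hz.1).trans h), hAσ⟩

end Triangulation

lemma TriIneqT.triIneq_lRes (hl : TriIneqT T l) (i : Fin n) : TriIneq (lRes T l i) :=
  ⟨hl.1 i, hl.2 i⟩

lemma exists_dD_eq_of_notMem_Kset (hl : TriIneqT T l) {x z w : E2} (hx : x ∈ Dtri)
    (hz : z ∈ Dtri) (hw : w ∈ Dtri) (hzw : T.σ i z = T.σ j w) (hzx : z ∉ Kset x) :
    ∃ x' ∈ Dtri, T.σ j x' = T.σ i x ∧ dD (lRes T l j) x' w = dD (lRes T l i) x z := by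
  rcases mem_V0_or_mem_Do_or_mem_eo hz with hzV | hzDo | ⟨e, he, hze⟩
  · obtain rfl := eq_of_mem_V0_of_notMem_Kset hzV hzx
    exact ⟨w, hw, hzw.symm, by rw [dD_self, dD_self]⟩
  · obtain ⟨rfl, rfl⟩ := T.eq_and_eq_of_mem_Do hzDo hw hzw
    exact ⟨x, hx, rfl, rfl⟩
  · obtain ⟨e', he', A, hA, rfl, hAσ⟩ := T.exists_affineMap_of_mem_eo he hze hw hzw
    have hxe := mem_of_notMem_Kset hzx he hze.1
    have hlen : lRes T l j e' = lRes T l i e := by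
      rw [lRes, lRes, ← hA, image_image, image_congr hAσ]
    exact ⟨A x, subset_Dtri_of_mem_E0 he' (hA ▸ mem_image_of_mem A hxe), hAσ x hxe,
      dD_map_eq_of_image_eq (hl.triIneq_lRes i) (hl.triIneq_lRes j) he he' hlen hA hxe hze.1⟩

lemma rS_le_rObs (T : Triangulation S n) (l : Set S → ℝ) (i : Fin n) {x : E2} (hx : x ∈ Dtri) :
    rS T l (T.σ i x) ≤ rObs (lRes T l i) x := by
  refine csInf_le ⟨0, ?_⟩ ⟨i, x, hx, rfl, rfl⟩
  rintro _ ⟨j, x', -, -, rfl⟩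
  exact rObs_nonneg _ _

lemma notMem_Kset_of_dD_lt_rS {x z : E2} (hx : x ∈ Dtri)
    (h : dD (lRes T l i) x z < rS T l (T.σ i x)) : z ∉ Kset x := fun hz =>
  h.not_ge ((rS_le_rObs T l i hx).trans (rObs_le_dD hz))

lemma dTri_nonneg (T : Triangulation S n) (l : Set S → ℝ) (i : Fin n) (x y : S) :
    0 ≤ dTri T l i x y :=
  Real.sInf_nonneg <| by
    rintro _ ⟨x', -, y', -, -, -, rfl⟩
    exact dD_nonneg _ _ _

lemma dTri_le_dD (T : Triangulation S n) (l : Set S → ℝ) (i : Fin n) {x y : E2} (hx : x ∈ Dtri)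
    (hy : y ∈ Dtri) : dTri T l i (T.σ i x) (T.σ i y) ≤ dD (lRes T l i) x y := by
  refine csInf_le ⟨0, ?_⟩ ⟨x, hx, y, hy, rfl, rfl, rfl⟩
  rintro _ ⟨x', -, y', -, -, -, rfl⟩
  exact dD_nonneg _ _ _

lemma exists_dD_lt_of_dTri_lt {x y : S} (hx : x ∈ T.σ i '' Dtri) (hy : y ∈ T.σ i '' Dtri) {t : ℝ}
    (h : dTri T l i x y < t) :
    ∃ x' ∈ Dtri, ∃ y' ∈ Dtri, T.σ i x' = x ∧ T.σ i y' = y ∧ dD (lRes T l i) x' y' < t := by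
  obtain ⟨x₀, hx₀, hx₀x⟩ := hx
  obtain ⟨y₀, hy₀, hy₀y⟩ := hy
  obtain ⟨_, ⟨x', hx', y', hy', hx'x, hy'y, rfl⟩, hlt⟩ :=
    exists_lt_of_csInf_lt (by exact ⟨_, x₀, hx₀, y₀, hy₀, hx₀x, hy₀y, rfl⟩) h
  exact ⟨x', hx', y', hy', hx'x, hy'y, hlt⟩

lemma dTri_self {x : S} (hx : x ∈ T.σ i '' Dtri) : dTri T l i x x = 0 := by
  obtain ⟨x', hx', rfl⟩ := hx
  exact ((dTri_le_dD T l i hx' hx').trans_eq (dD_self _ _)).antisymm (dTri_nonneg _ _ _ _ _)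

lemma mem_image_Dtri_of_dTri_lt_rS (hl : TriIneqT T l) {x y : S} (hx : x ∈ T.σ i '' Dtri)
    (hyi : y ∈ T.σ i '' Dtri) (hyj : y ∈ T.σ j '' Dtri) (h : dTri T l i x y < rS T l x) :
    x ∈ T.σ j '' Dtri := by
  obtain ⟨x', hx', y', hy', rfl, rfl, hlt⟩ := exists_dD_lt_of_dTri_lt hx hyi h
  obtain ⟨w, hw, hwy⟩ := hyj
  obtain ⟨x'', hx'', hσ, -⟩ :=
    exists_dD_eq_of_notMem_Kset hl hx' hy' hw hwy.symm (notMem_Kset_of_dD_lt_rS hx' hlt)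
  exact ⟨x'', hx'', hσ⟩

lemma dTri_le_add_of_dTri_lt_rS (hl : TriIneqT T l) {x y z : S} (hx : x ∈ T.σ i '' Dtri)
    (hyi : y ∈ T.σ i '' Dtri) (hyj : y ∈ T.σ j '' Dtri) (hz : z ∈ T.σ j '' Dtri)
    (h : dTri T l i x y < rS T l x) :
    dTri T l j x z ≤ dTri T l i x y + dTri T l j y z := by
  refine le_of_forall_pos_le_add fun ε hε => ?_
  obtain ⟨x', hx', y', hy', rfl, rfl, hlt⟩ :=
    exists_dD_lt_of_dTri_lt hx hyi (lt_min h (lt_add_of_pos_right _ (half_pos hε)))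
  obtain ⟨hltr, hltε⟩ := lt_min_iff.mp hlt
  obtain ⟨w, hw, z', hz', hwy, rfl, hwz⟩ :=
    exists_dD_lt_of_dTri_lt (l := l) hyj hz (lt_add_of_pos_right _ (half_pos hε))
  obtain ⟨x'', hx'', hσ, hdD⟩ :=
    exists_dD_eq_of_notMem_Kset hl hx' hy' hw hwy.symm (notMem_Kset_of_dD_lt_rS hx' hltr)
  calc
    dTri T l j (T.σ i x') (T.σ j z') ≤ dD (lRes T l j) x'' z' := hσ ▸ dTri_le_dD T l j hx'' hz'
    _ ≤ dD (lRes T l j) x'' w + dD (lRes T l j) w z' := dD_triangle _ _ _ _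
    _ ≤ dTri T l i (T.σ i x') (T.σ i y') + dTri T l j (T.σ i y') (T.σ j z') + ε := by
      rw [hdD]
      linarith

lemma zero_mem_chainSums (T : Triangulation S n) (l : Set S → ℝ) (x : S) :
    0 ∈ chainSums T l x x :=
  have ⟨i, _⟩ := T.exists_mem_image_Dtri x
  ⟨0, fun _ => x, fun _ => i, rfl, rfl, by simp, by simp⟩

lemma add_dTri_mem_chainSums {x y z : S} {r : ℝ} (hr : r ∈ chainSums T l x y)
    (hy : y ∈ T.σ i '' Dtri) (hz : z ∈ T.σ i '' Dtri) :
    r + dTri T l i y z ∈ chainSums T l x z := by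
  obtain ⟨k, c, idx, rfl, rfl, hc, rfl⟩ := hr
  refine ⟨k + 1, Function.update c (k + 1) z, Function.update idx k i, by simp, by simp, ?_, ?_⟩
  · intro j hj
    rcases (Nat.lt_succ_iff.mp hj).eq_or_lt with rfl | hjk
    · simp [hy, hz]
    · simpa [hjk.ne, (hjk.trans k.lt_succ_self).ne] using hc j hjk
  · rw [Finset.sum_range_succ]
    congr 1
    · refine Finset.sum_congr rfl fun j hj => ?_
      have hjk := Finset.mem_range.mp hj
      simp [hjk.ne, (hjk.trans k.lt_succ_self).ne]
    · simp

lemma dTri_mem_chainSums {x y : S} (hx : x ∈ T.σ i '' Dtri) (hy : y ∈ T.σ i '' Dtri) :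
    dTri T l i x y ∈ chainSums T l x y :=
  zero_add (dTri T l i x y) ▸ add_dTri_mem_chainSums (zero_mem_chainSums T l x) hx hy

lemma chainSums_nonempty [T2Space S] [PreconnectedSpace S] (T : Triangulation S n) (l : Set S → ℝ)
    (x y : S) : (chainSums T l x y).Nonempty := by
  have hclopen : IsClopen {z | (chainSums T l x z).Nonempty} :=
    isClopen_of_finite_closed_cover T.isClosed_image_Dtri T.exists_mem_image_Dtri
      fun _ _ hu _ hv ⟨_, hr⟩ => ⟨_, add_dTri_mem_chainSums hr hu hv⟩
  exact (hclopen.eq_univ ⟨x, 0, zero_mem_chainSums T l x⟩).ge (mem_univ y)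

lemma dGlue_le_dTri {x y : S} (hx : x ∈ T.σ i '' Dtri) (hy : y ∈ T.σ i '' Dtri) :
    dGlue T l x y ≤ dTri T l i x y := by
  refine csInf_le ⟨0, ?_⟩ (dTri_mem_chainSums hx hy)
  rintro _ ⟨k, c, idx, -, -, -, rfl⟩
  exact Finset.sum_nonneg fun j _ => dTri_nonneg _ _ _ _ _

lemma exists_dTri_le_of_mem_chainSums (hl : TriIneqT T l) {x y : S} {r : ℝ}
    (hr : r ∈ chainSums T l x y) (hrx : r < rS T l x) :
    ∃ i, (x ∈ T.σ i '' Dtri ∧ y ∈ T.σ i '' Dtri) ∧ dTri T l i x y ≤ r := by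
  obtain ⟨k, c, idx, rfl, rfl, hc, rfl⟩ := hr
  induction k with
  | zero =>
    obtain ⟨i, hi⟩ := T.exists_mem_image_Dtri (c 0)
    exact ⟨i, ⟨hi, hi⟩, by simp [dTri_self hi]⟩
  | succ k ih =>
    rw [Finset.sum_range_succ] at hrx ⊢
    obtain ⟨hyj, hzj⟩ := hc k k.lt_succ_self
    have hlink := dTri_nonneg T l (idx k) (c k) (c (k + 1))
    obtain ⟨i, ⟨hxi, hyi⟩, hle⟩ :=
      ih (fun j hj => hc j (hj.trans k.lt_succ_self)) (by linarith)
    have hlt : dTri T l i (c 0) (c k) < rS T l (c 0) := by linarith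
    exact ⟨idx k, ⟨mem_image_Dtri_of_dTri_lt_rS hl hxi hyi hyj hlt, hzj⟩,
      (dTri_le_add_of_dTri_lt_rS hl hxi hyi hyj hzj hlt).trans (by gcongr)⟩

end Triangulation

/-- Proposition 3.4: for all `x, y ∈ S`, either `d[l](x,y) ≥ r(x)`, or
`d[l](x,y) = dᵢ(x,y)` for some `i ∈ I` with `x, y ∈ σᵢ(D)`. -/
theorem dGlue_ge_rS_or_eq_dTri
    {S : Type} [TopologicalSpace S] [CompactSpace S] [T2Space S] [ConnectedSpace S]
    {n : ℕ} (T : Triangulation S n) (l : Set S → ℝ) (hl : TriIneqT T l) :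
    ∀ x y : S, dGlue T l x y ≥ rS T l x ∨
      ∃ i : Fin n, x ∈ T.σ i '' Dtri ∧ y ∈ T.σ i '' Dtri ∧
        dGlue T l x y = dTri T l i x y := by
  intro x y
  rcases le_or_gt (rS T l x) (dGlue T l x y) with hge | hlt
  · exact Or.inl hge
  right
  have hchains := chainSums_nonempty T l x y
  obtain ⟨r, hr, hrx⟩ := exists_lt_of_csInf_lt hchains hlt
  obtain ⟨i₀, hi₀, -⟩ := exists_dTri_le_of_mem_chainSums hl hr hrx
  obtain ⟨i, ⟨hx, hy⟩, hmin⟩ := exists_min_image {i | x ∈ T.σ i '' Dtri ∧ y ∈ T.σ i '' Dtri}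
    (dTri T l · x y) (toFinite _) ⟨i₀, hi₀⟩
  refine ⟨i, hx, hy, (dGlue_le_dTri hx hy).antisymm ?_⟩
  have hle : min (rS T l x) (dTri T l i x y) ≤ dGlue T l x y := by
    refine le_csInf hchains fun s hs => ?_
    rcases le_or_gt (rS T l x) s with hxs | hsx
    · exact min_le_of_left_le hxs
    · obtain ⟨j, hj, hjs⟩ := exists_dTri_le_of_mem_chainSums hl hs hsx
      exact min_le_of_right_le ((hmin j hj).trans hjs)
  exact (min_le_iff.mp hle).resolve_left hlt.not_ge
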